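/- Let n ≥ 3. A nontrivial 1-cycle Z on [n] over F_2 is the boundary of a 2-hypertree on [n] if and only if |Z| ≡ C(n-1,2) (mod 2). -/

import Mathlib

open Finset symmDiff

/-- The vertex set `[n] = {1, …, n}`. -/
def rng (n : ℕ) : Finset ℕ := Finset.Icc 1 n

/-- The set of `d`-simplices (i.e. `(d+1)`-element subsets) on the vertex set `V`. -/
def simplices (V : Finset ℕ) (d : ℕ) : Finset (Finset ℕ) :=
  V.powerset.filter fun σ => σ.card = d + 1

/-- The mod-2 boundary of a set `X` of simplices: the set of faces `τ` of codimension one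
(`|τ| + 1 = |σ|`) contained in an odd number of members of `X`. -/
def bd (X : Finset (Finset ℕ)) : Finset (Finset ℕ) :=
  (X.biUnion fun σ => σ.powerset).filter
    fun τ => Odd (X.filter fun σ => τ ⊆ σ ∧ τ.card + 1 = σ.card).card

/-- A set of simplices is acyclic (a forest) over `F_2` if no nonempty subset has
empty boundary. -/
def IsAcyclic (F : Finset (Finset ℕ)) : Prop :=
  ∀ Y ⊆ F, Y ≠ ∅ → bd Y ≠ ∅

/-- A `d`-hypertree on `V`: a maximal acyclic set of `d`-simplices on `V`. -/
def IsHypertreeOn (V : Finset ℕ) (d : ℕ) (T : Finset (Finset ℕ)) : Prop :=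
  T ⊆ simplices V d ∧ IsAcyclic T ∧
    ∀ G, T ⊆ G → G ⊆ simplices V d → IsAcyclic G → G = T

/-- A simple cycle over `F_2`: a nonempty set with empty boundary, no nonempty proper
subset of which has empty boundary. -/
def IsSimpleCycle (Z : Finset (Finset ℕ)) : Prop :=
  Z ≠ ∅ ∧ bd Z = ∅ ∧ ∀ Y ⊂ Z, Y ≠ ∅ → bd Y ≠ ∅

/-- Collapsibility: `X` can be reduced to `∅` by repeatedly removing a simplex `σ ∈ X`
containing a codimension-one face contained in no other current member of `X`. -/
inductive Collapsible : Finset (Finset ℕ) → Prop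
  | empty : Collapsible ∅
  | step (X : Finset (Finset ℕ)) (σ τ : Finset ℕ) (hσ : σ ∈ X) (hτ : τ ⊆ σ)
      (hcard : τ.card + 1 = σ.card) (huniq : ∀ σ' ∈ X, τ ⊆ σ' → σ' = σ)
      (h : Collapsible (X.erase σ)) : Collapsible X

/-- The cone over `X` with apex `v`. -/
def cone (v : ℕ) (X : Finset (Finset ℕ)) : Finset (Finset ℕ) :=
  X.image (insert v)

/-- The link of the vertex `v` in `X`. -/
def link (v : ℕ) (X : Finset (Finset ℕ)) : Finset (Finset ℕ) :=
  (X.filter fun σ => v ∈ σ).image fun σ => σ.erase v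

/-- `fill Z T`: the subset `F ⊆ T` with `∂F = Z` (when it exists; it is unique when `T`
is a hypertree and `Z` a cycle). -/
noncomputable def fill (Z T : Finset (Finset ℕ)) : Finset (Finset ℕ) :=
  if h : ∃ F, F ⊆ T ∧ bd F = Z then h.choose else ∅

/-- The average filling-volume `μ(T)` of a `d`-hypertree `T` on `[n]`. -/
noncomputable def fillVolAvg (n d : ℕ) (T : Finset (Finset ℕ)) : ℝ :=
  (∑ σ ∈ simplices (rng n) d, ((fill (bd {σ}) T).card : ℝ)) / (n.choose (d + 1) : ℝ)

open Classical in
/-- The cut of `τ` in `T`: the set of `d`-simplices `σ` on `[n]` such that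
`T ⊕ {τ} ⊕ {σ}` is a `d`-hypertree on `[n]`. -/
noncomputable def cut (n d : ℕ) (τ : Finset ℕ) (T : Finset (Finset ℕ)) : Finset (Finset ℕ) :=
  (simplices (rng n) d).filter fun σ => IsHypertreeOn (rng n) d ((T ∆ {τ}) ∆ {σ})

/-!
Split a family of simplices at a vertex `v` as `X = D ⊕ v * L`, with `D` the deletion and `L` the
link of `v`; then `∂X = (∂D ⊕ L) ⊕ v * ∂L`. Hence a cycle is determined by its deletion, and every
chain on `V \ {v}` is the deletion of the boundary of a cone. Since the subsets of a `d`-hypertree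
`T` correspond to the boundaries of `d`-chains, `2 ^ |T|` counts the sets of `(d - 1)`-simplices on
`V \ {v}`, so that `|T| = C(|V| - 1, d)`. As `|∂T| ≡ 3 |T|` for `d = 2`, the parity condition is
necessary.

For sufficiency, induct on the vertex set. Choose `v` in the support of the cycle `Z = D ⊕ v * L`.
If `G` is a spanning tree of `V \ {v}` with `∂G = L` and `T` is a 2-hypertree on `V \ {v}` with
`∂T = D ⊕ G`, then `T ⊕ v * G` is a 2-hypertree on `V` with boundary `Z`. The induction hypothesis
requires `D ⊕ G ≠ ∅`: on at least four vertices there is more than one choice of `G`, on three the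
parity condition excludes `D = G`, and on two the empty hypertree serves.
-/

section SymmDiff

variable {α : Type*} [DecidableEq α]

lemma card_symmDiff_add_two_mul_card_inter (A B : Finset α) :
    (A ∆ B).card + 2 * (A ∩ B).card = A.card + B.card := by
  have hA := card_sdiff_add_card_inter A B
  have hB := card_sdiff_add_card_inter B A
  rw [inter_comm] at hB
  rw [Finset.symmDiff_def, card_union_of_disjoint disjoint_sdiff_sdiff]
  omega

lemma filter_symmDiff (p : α → Prop) [DecidablePred p] (A B : Finset α) :
    (A ∆ B).filter p = A.filter p ∆ B.filter p := by
  ext x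
  simp only [mem_filter, mem_symmDiff]
  tauto

lemma symmDiff_subset {A B S : Finset α} (hA : A ⊆ S) (hB : B ⊆ S) : A ∆ B ⊆ S :=
  symmDiff_subset_union.trans (union_subset hA hB)

lemma insert_eq_symmDiff {a : α} {A : Finset α} (ha : a ∉ A) : insert a A = {a} ∆ A := by
  rw [symmDiff_eq_union (disjoint_singleton_left.2 ha), singleton_union]

end SymmDiff

variable {V W σ τ : Finset ℕ} {A B F G L T X Y Z : Finset (Finset ℕ)} {d k v w x : ℕ}

lemma simplices_eq_powersetCard (V : Finset ℕ) (d : ℕ) :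
    simplices V d = V.powersetCard (d + 1) := by
  ext σ
  simp [simplices, mem_powersetCard]

section Boundary

lemma mem_bd : τ ∈ bd X ↔ Odd (X.filter fun σ => τ ⊆ σ ∧ τ.card + 1 = σ.card).card := by
  rw [bd, mem_filter, and_iff_right_iff_imp]
  intro hodd
  obtain ⟨σ, hσ⟩ := card_pos.1 hodd.pos
  rw [mem_filter] at hσ
  exact mem_biUnion.2 ⟨σ, hσ.1, mem_powerset.2 hσ.2.1⟩

lemma exists_mem_of_mem_bd (hτ : τ ∈ bd X) : ∃ σ ∈ X, τ ⊆ σ ∧ τ.card + 1 = σ.card := by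
  obtain ⟨σ, hσ⟩ := card_pos.1 (mem_bd.1 hτ).pos
  exact ⟨σ, mem_filter.1 hσ⟩

@[simp] lemma bd_empty : bd ∅ = ∅ := by simp [bd]

lemma bd_symmDiff (A B : Finset (Finset ℕ)) : bd (A ∆ B) = bd A ∆ bd B := by
  ext τ
  have hcard := card_symmDiff_add_two_mul_card_inter
    (A.filter fun σ => τ ⊆ σ ∧ τ.card + 1 = σ.card)
    (B.filter fun σ => τ ⊆ σ ∧ τ.card + 1 = σ.card)
  simp only [mem_symmDiff, mem_bd, filter_symmDiff, Nat.odd_iff]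
  omega

lemma bd_insert (hσ : σ ∉ X) : bd (insert σ X) = bd {σ} ∆ bd X := by
  rw [insert_eq_symmDiff hσ, bd_symmDiff]

lemma bd_singleton (σ : Finset ℕ) : bd {σ} = σ.image σ.erase := by
  ext τ
  have hface : τ ⊆ σ ∧ τ.card + 1 = σ.card ↔ ∃ a ∈ σ, σ.erase a = τ := by
    constructor
    · rintro ⟨hsub, hcard⟩
      obtain ⟨a, ha, rfl⟩ := exists_eq_insert_iff.2 ⟨hsub, hcard⟩
      exact ⟨a, mem_insert_self a τ, erase_insert ha⟩
    · rintro ⟨a, ha, rfl⟩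
      exact ⟨erase_subset a σ, card_erase_add_one ha⟩
  rw [mem_bd, mem_image, ← hface, filter_singleton]
  split_ifs with h <;> simp [h]

lemma card_bd_singleton (σ : Finset ℕ) : (bd {σ}).card = σ.card := by
  rw [bd_singleton, card_image_of_injOn (erase_injOn σ)]

lemma card_bd_modEq_sum_card (X : Finset (Finset ℕ)) :
    (bd X).card ≡ ∑ σ ∈ X, σ.card [MOD 2] := by
  induction X using Finset.induction_on with
  | empty => rfl
  | insert σ X hσ ih =>
    have hcard := card_symmDiff_add_two_mul_card_inter (bd {σ}) (bd X)
    rw [card_bd_singleton] at hcard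
    rw [bd_insert hσ, sum_insert hσ]
    unfold Nat.ModEq at ih ⊢
    omega

lemma card_bd_modEq_mul_card (hX : X ⊆ V.powersetCard k) :
    (bd X).card ≡ X.card * k [MOD 2] := by
  rw [← sum_const_nat fun σ hσ => (mem_powersetCard.1 (hX hσ)).2]
  exact card_bd_modEq_sum_card X

lemma bd_subset_powersetCard (hX : X ⊆ V.powersetCard (k + 1)) : bd X ⊆ V.powersetCard k := by
  intro τ hτ
  obtain ⟨σ, hσ, hsub, hcard⟩ := exists_mem_of_mem_bd hτ
  obtain ⟨hσV, hσcard⟩ := mem_powersetCard.1 (hX hσ)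
  exact mem_powersetCard.2 ⟨hsub.trans hσV, by omega⟩

end Boundary

section ConeDecomposition

/-- The deletion of the vertex `v` from `X`: the members of `X` that do not contain `v`. Together
with `link v X` it determines `X`. -/
def deletion (v : ℕ) (X : Finset (Finset ℕ)) : Finset (Finset ℕ) :=
  X.filter fun σ => v ∉ σ

/-- No member of `X` contains `v`, so that `cone v` adds a vertex to every member of `X`. -/
def Avoids (v : ℕ) (X : Finset (Finset ℕ)) : Prop := ∀ σ ∈ X, v ∉ σ

lemma Avoids.symmDiff (hA : Avoids v A) (hB : Avoids v B) : Avoids v (A ∆ B) := fun σ hσ =>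
  (mem_union.1 (symmDiff_subset_union hσ)).elim (hA σ) (hB σ)

lemma avoids_bd (hX : Avoids v X) : Avoids v (bd X) := fun _ hτ hv => by
  obtain ⟨σ, hσ, hsub, -⟩ := exists_mem_of_mem_bd hτ
  exact hX σ hσ (hsub hv)

lemma avoids_deletion (v : ℕ) (X : Finset (Finset ℕ)) : Avoids v (deletion v X) :=
  fun _ hσ => (mem_filter.1 hσ).2

lemma avoids_of_subset_powersetCard (hX : X ⊆ (V.erase v).powersetCard k) : Avoids v X :=
  fun _ hσ hv => notMem_erase v V ((mem_powersetCard.1 (hX hσ)).1 hv)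

lemma mem_cone (hX : Avoids v X) : τ ∈ cone v X ↔ v ∈ τ ∧ τ.erase v ∈ X := by
  rw [cone, mem_image]
  constructor
  · rintro ⟨σ, hσ, rfl⟩
    exact ⟨mem_insert_self v σ, by rwa [erase_insert (hX σ hσ)]⟩
  · rintro ⟨hv, hτ⟩
    exact ⟨τ.erase v, hτ, insert_erase hv⟩

lemma mem_link : τ ∈ link v X ↔ v ∉ τ ∧ insert v τ ∈ X := by
  rw [link, mem_image]
  constructor
  · rintro ⟨σ, hσ, rfl⟩
    obtain ⟨hσX, hv⟩ := mem_filter.1 hσ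
    exact ⟨notMem_erase v σ, by rwa [insert_erase hv]⟩
  · rintro ⟨hv, hτ⟩
    exact ⟨insert v τ, mem_filter.2 ⟨hτ, mem_insert_self v τ⟩, erase_insert hv⟩

lemma avoids_link (v : ℕ) (X : Finset (Finset ℕ)) : Avoids v (link v X) :=
  fun _ hσ => (mem_link.1 hσ).1

lemma link_mono (h : X ⊆ Y) : link v X ⊆ link v Y :=
  image_subset_image (filter_subset_filter _ h)

lemma card_cone (hX : Avoids v X) : (cone v X).card = X.card := by
  refine card_image_of_injOn fun σ hσ τ hτ h => ?_
  rw [← erase_insert (hX σ hσ), ← erase_insert (hX τ hτ)]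
  exact congrArg (erase · v) h

lemma cone_symmDiff (hA : Avoids v A) (hB : Avoids v B) :
    cone v (A ∆ B) = cone v A ∆ cone v B := by
  ext τ
  simp only [mem_cone (hA.symmDiff hB), mem_symmDiff, mem_cone hA, mem_cone hB]
  tauto

lemma deletion_symmDiff_cone_link (v : ℕ) (X : Finset (Finset ℕ)) :
    deletion v X ∆ cone v (link v X) = X := by
  ext τ
  rw [mem_symmDiff, mem_cone (avoids_link v X), mem_link, deletion, mem_filter]
  by_cases hv : v ∈ τ <;> simp [hv, insert_erase]

lemma deletion_symmDiff_cone (hA : Avoids v A) (hB : Avoids v B) :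
    deletion v (A ∆ cone v B) = A := by
  ext τ
  rw [deletion, mem_filter, mem_symmDiff, mem_cone hB]
  have := hA τ
  tauto

lemma link_symmDiff_cone (hA : Avoids v A) (hB : Avoids v B) : link v (A ∆ cone v B) = B := by
  ext τ
  have hvA : insert v τ ∉ A := fun h => hA _ h (mem_insert_self v τ)
  rw [mem_link, mem_symmDiff, mem_cone hB]
  constructor
  · rintro ⟨hv, h⟩
    simpa [hvA, erase_insert hv] using h
  · intro h
    simp [hB τ h, hvA, h]

lemma eq_empty_of_deletion_eq_empty_of_link_eq_empty (hdel : deletion v X = ∅)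
    (hlink : link v X = ∅) : X = ∅ := by
  simpa [hdel, hlink, cone] using (deletion_symmDiff_cone_link v X).symm

lemma card_symmDiff_cone (hA : Avoids v A) (hB : Avoids v B) :
    (A ∆ cone v B).card = A.card + B.card := by
  have hdisj : Disjoint A (cone v B) :=
    disjoint_left.2 fun σ hσA hσB => hA σ hσA ((mem_cone hB).1 hσB).1
  rw [symmDiff_eq_union hdisj, card_union_of_disjoint hdisj, card_cone hB]

lemma card_deletion_add_card_link (v : ℕ) (X : Finset (Finset ℕ)) :
    (deletion v X).card + (link v X).card = X.card := by
  rw [← card_symmDiff_cone (avoids_deletion v X) (avoids_link v X), deletion_symmDiff_cone_link]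

lemma cone_subset_powersetCard (hv : v ∈ V) (hX : X ⊆ (V.erase v).powersetCard k) :
    cone v X ⊆ V.powersetCard (k + 1) := by
  refine image_subset_iff.2 fun σ hσ => ?_
  obtain ⟨hσV, hσcard⟩ := mem_powersetCard.1 (hX hσ)
  rw [mem_powersetCard, card_insert_of_notMem (avoids_of_subset_powersetCard hX σ hσ), hσcard]
  exact ⟨insert_subset hv (hσV.trans (erase_subset v V)), rfl⟩

lemma deletion_subset_powersetCard (hX : X ⊆ V.powersetCard k) :
    deletion v X ⊆ (V.erase v).powersetCard k := by
  intro σ hσ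
  obtain ⟨hσX, hv⟩ := mem_filter.1 hσ
  obtain ⟨hσV, hσcard⟩ := mem_powersetCard.1 (hX hσX)
  exact mem_powersetCard.2 ⟨subset_erase.2 ⟨hσV, hv⟩, hσcard⟩

lemma link_subset_powersetCard (hX : X ⊆ V.powersetCard (k + 1)) :
    link v X ⊆ (V.erase v).powersetCard k := by
  intro σ hσ
  obtain ⟨hv, hσX⟩ := mem_link.1 hσ
  obtain ⟨hσV, hσcard⟩ := mem_powersetCard.1 (hX hσX)
  rw [card_insert_of_notMem hv] at hσcard
  exact mem_powersetCard.2
    ⟨subset_erase.2 ⟨(subset_insert v σ).trans hσV, hv⟩, by omega⟩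

end ConeDecomposition

section BoundaryOfCone

lemma bd_singleton_insert (hv : v ∉ σ) : bd {insert v σ} = {σ} ∆ cone v (bd {σ}) := by
  have hcone : σ ∉ cone v (bd {σ}) := by
    intro h
    obtain ⟨τ, -, rfl⟩ := mem_image.1 h
    exact hv (mem_insert_self v τ)
  rw [← insert_eq_symmDiff hcone, bd_singleton, bd_singleton, image_insert, erase_insert hv, cone,
    image_image]
  congr 1
  refine image_congr fun a ha => erase_insert_of_ne ?_
  rintro rfl
  exact hv ha

lemma bd_cone (hX : Avoids v X) : bd (cone v X) = X ∆ cone v (bd X) := by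
  induction X using Finset.induction_on with
  | empty => simp [cone]
  | insert σ X hσ ih =>
    obtain ⟨hvσ, hvX⟩ := forall_mem_insert .. |>.1 hX
    have hcone : insert v σ ∉ cone v X := by
      rw [mem_cone hvX, erase_insert hvσ]
      exact fun h => hσ h.2
    have hbdσ : Avoids v (bd {σ}) := avoids_bd fun τ hτ => mem_singleton.1 hτ ▸ hvσ
    calc bd (cone v (insert σ X))
        = bd {insert v σ} ∆ bd (cone v X) := by rw [cone, image_insert, ← cone, bd_insert hcone]
      _ = ({σ} ∆ cone v (bd {σ})) ∆ (X ∆ cone v (bd X)) := by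
          rw [bd_singleton_insert hvσ, ih hvX]
      _ = ({σ} ∆ X) ∆ cone v (bd {σ} ∆ bd X) := by
          rw [symmDiff_symmDiff_symmDiff_comm, cone_symmDiff hbdσ (avoids_bd hvX)]
      _ = insert σ X ∆ cone v (bd (insert σ X)) := by
          rw [bd_insert hσ, insert_eq_symmDiff hσ]

lemma bd_eq_symmDiff_cone (v : ℕ) (X : Finset (Finset ℕ)) :
    bd X = (bd (deletion v X) ∆ link v X) ∆ cone v (bd (link v X)) := by
  conv_lhs => rw [← deletion_symmDiff_cone_link v X]
  rw [bd_symmDiff, bd_cone (avoids_link v X), symmDiff_assoc]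

lemma deletion_bd (v : ℕ) (X : Finset (Finset ℕ)) :
    deletion v (bd X) = bd (deletion v X) ∆ link v X := by
  rw [bd_eq_symmDiff_cone v X, deletion_symmDiff_cone
    ((avoids_bd (avoids_deletion v X)).symmDiff (avoids_link v X)) (avoids_bd (avoids_link v X))]

lemma link_bd (v : ℕ) (X : Finset (Finset ℕ)) : link v (bd X) = bd (link v X) := by
  rw [bd_eq_symmDiff_cone v X, link_symmDiff_cone
    ((avoids_bd (avoids_deletion v X)).symmDiff (avoids_link v X)) (avoids_bd (avoids_link v X))]

lemma bd_link_eq_empty (hX : bd X = ∅) : bd (link v X) = ∅ := by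
  rw [← link_bd, hX]
  rfl

lemma bd_deletion_eq_link (hX : bd X = ∅) : bd (deletion v X) = link v X := by
  rw [← symmDiff_eq_empty, ← deletion_bd, hX]
  rfl

lemma bd_bd_singleton (σ : Finset ℕ) : bd (bd {σ}) = ∅ := by
  induction σ using Finset.induction_on with
  | empty => simp [bd_singleton]
  | insert v σ hv ih =>
    have hσ : Avoids v (bd {σ}) := avoids_bd fun τ hτ => mem_singleton.1 hτ ▸ hv
    rw [bd_singleton_insert hv, bd_symmDiff, bd_cone hσ, ih]
    simp [cone]

lemma bd_bd (X : Finset (Finset ℕ)) : bd (bd X) = ∅ := by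
  induction X using Finset.induction_on with
  | empty => simp
  | insert σ X hσ ih => rw [bd_insert hσ, bd_symmDiff, ih, bd_bd_singleton, symmDiff_self]; rfl

lemma eq_empty_of_bd_eq_empty_of_deletion_eq_empty (hbd : bd X = ∅)
    (hdel : deletion v X = ∅) : X = ∅ := by
  refine eq_empty_of_deletion_eq_empty_of_link_eq_empty hdel ?_
  rw [← bd_deletion_eq_link hbd, hdel, bd_empty]

end BoundaryOfCone

section Acyclic

lemma IsAcyclic.eq_empty (hF : IsAcyclic F) (hY : Y ⊆ F) (hbd : bd Y = ∅) : Y = ∅ :=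
  by_contra fun hne => hF Y hY hne hbd

lemma isAcyclic_of_deletion_of_link (hdel : IsAcyclic (deletion v X))
    (hlink : IsAcyclic (link v X)) : IsAcyclic X := by
  intro Y hY hne hbd
  have hlinkY : link v Y = ∅ := hlink.eq_empty (link_mono hY) (bd_link_eq_empty hbd)
  have hdelY : deletion v Y = ∅ := hdel.eq_empty (filter_subset_filter _ hY)
    ((bd_deletion_eq_link hbd).trans hlinkY)
  exact hne (eq_empty_of_deletion_eq_empty_of_link_eq_empty hdelY hlinkY)

lemma IsAcyclic.injOn_deletion_bd (hF : IsAcyclic F) (v : ℕ) :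
    Set.InjOn (fun Y => deletion v (bd Y)) F.powerset := by
  intro Y₁ hY₁ Y₂ hY₂ heq
  have hdel : deletion v (bd (Y₁ ∆ Y₂)) = ∅ := by
    rw [bd_symmDiff, deletion, filter_symmDiff]
    exact symmDiff_eq_empty.2 heq
  exact symmDiff_eq_empty.1 <| hF.eq_empty
    (symmDiff_subset (mem_powerset.1 hY₁) (mem_powerset.1 hY₂))
    (eq_empty_of_bd_eq_empty_of_deletion_eq_empty (bd_bd _) hdel)

lemma IsAcyclic.card_le (hF : IsAcyclic F) (hFV : F ⊆ simplices V d) (hv : v ∈ V) :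
    F.card ≤ (V.card - 1).choose d := by
  rw [simplices_eq_powersetCard] at hFV
  have hpow : F.powerset.card ≤ ((V.erase v).powersetCard d).powerset.card :=
    card_le_card_of_injOn (fun Y => deletion v (bd Y))
      (fun Y hY => mem_powerset.2 <| deletion_subset_powersetCard <| bd_subset_powersetCard <|
        (mem_powerset.1 hY).trans hFV)
      (hF.injOn_deletion_bd v)
  rw [card_powerset, card_powerset, card_powersetCard, card_erase_of_mem hv] at hpow
  exact (Nat.pow_le_pow_iff_right one_lt_two).1 hpow

lemma IsAcyclic.isHypertreeOn (hT : IsAcyclic T) (hTV : T ⊆ simplices V d) (hV : V.Nonempty)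
    (hcard : T.card = (V.card - 1).choose d) : IsHypertreeOn V d T := by
  obtain ⟨v, hv⟩ := hV
  exact ⟨hTV, hT, fun G hTG hGV hG =>
    (eq_of_subset_of_card_le hTG (hcard ▸ hG.card_le hGV hv)).symm⟩

end Acyclic

section Hypertree

lemma IsHypertreeOn.exists_bd_eq_bd_singleton (hT : IsHypertreeOn V d T)
    (hσ : σ ∈ simplices V d) : ∃ Y ⊆ T, bd Y = bd {σ} := by
  obtain ⟨hTV, hacyclic, hmax⟩ := hT
  by_cases hσT : σ ∈ T
  · exact ⟨{σ}, singleton_subset_iff.2 hσT, rfl⟩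
  have hcyclic : ¬ IsAcyclic (insert σ T) := fun h => hσT <|
    hmax _ (subset_insert σ T) (insert_subset hσ hTV) h ▸ mem_insert_self σ T
  simp only [IsAcyclic, not_forall, not_not] at hcyclic
  obtain ⟨C, hC, hne, hbd⟩ := hcyclic
  have hσC : σ ∈ C := by
    by_contra hσC
    exact hacyclic C ((subset_insert_iff_of_notMem hσC).1 hC) hne hbd
  refine ⟨C.erase σ, subset_insert_iff.1 hC, ?_⟩
  rw [← insert_erase hσC, bd_insert (notMem_erase σ C)] at hbd
  exact (symmDiff_eq_empty.1 hbd).symm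

lemma IsHypertreeOn.exists_bd_eq (hT : IsHypertreeOn V d T) (hX : X ⊆ simplices V d) :
    ∃ Y ⊆ T, bd Y = bd X := by
  induction X using Finset.induction_on with
  | empty => exact ⟨∅, empty_subset T, rfl⟩
  | insert σ X hσ ih =>
    obtain ⟨hσV, hXV⟩ := insert_subset_iff.1 hX
    obtain ⟨Y, hY, hbdY⟩ := ih hXV
    obtain ⟨Y', hY', hbdY'⟩ := hT.exists_bd_eq_bd_singleton hσV
    exact ⟨Y' ∆ Y, symmDiff_subset hY' hY, by rw [bd_insert hσ, bd_symmDiff, hbdY, hbdY']⟩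

lemma IsHypertreeOn.card_ge (hT : IsHypertreeOn V d T) (hv : v ∈ V) :
    (V.card - 1).choose d ≤ T.card := by
  have hsurj : ((V.erase v).powersetCard d).powerset ⊆
      T.powerset.image fun Y => deletion v (bd Y) := by
    intro A hA
    have hA := mem_powerset.1 hA
    have hvA := avoids_of_subset_powersetCard hA
    obtain ⟨Y, hY, hbdY⟩ := hT.exists_bd_eq
      (simplices_eq_powersetCard V d ▸ cone_subset_powersetCard hv hA)
    refine mem_image.2 ⟨Y, mem_powerset.2 hY, ?_⟩
    rw [hbdY, bd_cone hvA, deletion_symmDiff_cone hvA (avoids_bd hvA)]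
  have hpow := (card_le_card hsurj).trans card_image_le
  rw [card_powerset, card_powerset, card_powersetCard, card_erase_of_mem hv] at hpow
  exact (Nat.pow_le_pow_iff_right one_lt_two).1 hpow

lemma IsHypertreeOn.card_eq (hT : IsHypertreeOn V d T) (hV : V.Nonempty) :
    T.card = (V.card - 1).choose d := by
  obtain ⟨v, hv⟩ := hV
  exact (hT.2.1.card_le hT.1 hv).antisymm (hT.card_ge hv)

lemma isHypertreeOn_empty (hV : V.card ≤ d) : IsHypertreeOn V d ∅ := by
  have hsimp : simplices V d = ∅ := by
    rw [simplices_eq_powersetCard, powersetCard_eq_empty]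
    omega
  refine ⟨empty_subset _, fun Y hY hne => absurd (subset_empty.1 hY) hne, fun G _ hG _ => ?_⟩
  exact subset_empty.1 (hsimp ▸ hG)

lemma isHypertreeOn_singleton_vertex (hx : x ∈ V) : IsHypertreeOn V 0 {{x}} := by
  refine IsAcyclic.isHypertreeOn ?_ (by simpa [simplices] using hx) ⟨x, hx⟩ (by simp)
  intro Y hY hne
  rw [(subset_singleton_iff.1 hY).resolve_left hne, bd_singleton]
  simp

lemma IsHypertreeOn.avoids (hT : IsHypertreeOn (V.erase v) d T) : Avoids v T :=
  avoids_of_subset_powersetCard (simplices_eq_powersetCard _ _ ▸ hT.1)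

lemma IsHypertreeOn.symmDiff_cone (hv : v ∈ V) (hV : (V.erase v).Nonempty)
    (hT : IsHypertreeOn (V.erase v) (d + 1) T) (hG : IsHypertreeOn (V.erase v) d G) :
    IsHypertreeOn V (d + 1) (T ∆ cone v G) := by
  have hcard : (T ∆ cone v G).card = (V.card - 1).choose (d + 1) := by
    have hpos : 0 < (V.erase v).card := card_pos.2 hV
    rw [card_symmDiff_cone hT.avoids hG.avoids, hT.card_eq hV, hG.card_eq hV, add_comm,
      ← Nat.choose_succ_succ', Nat.sub_add_cancel hpos, card_erase_of_mem hv]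
  have hacyclic : IsAcyclic (T ∆ cone v G) := by
    apply isAcyclic_of_deletion_of_link (v := v)
    · rw [deletion_symmDiff_cone hT.avoids hG.avoids]
      exact hT.2.1
    · rw [link_symmDiff_cone hT.avoids hG.avoids]
      exact hG.2.1
  have hsub : T ∆ cone v G ⊆ simplices V (d + 1) := by
    have hTV := hT.1
    have hGV := hG.1
    rw [simplices_eq_powersetCard] at hTV hGV ⊢
    exact symmDiff_subset (hTV.trans (powersetCard_mono (erase_subset v V)))
      (cone_subset_powersetCard hv hGV)
  exact hacyclic.isHypertreeOn hsub ⟨v, hv⟩ hcard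

lemma bd_symmDiff_cone_eq (hG : Avoids v G) (hbdG : bd G = link v Z)
    (hbdT : bd T = deletion v Z ∆ G) : bd (T ∆ cone v G) = Z := by
  calc bd (T ∆ cone v G)
      = (deletion v Z ∆ G) ∆ (G ∆ cone v (link v Z)) := by
        rw [bd_symmDiff, bd_cone hG, hbdT, hbdG]
    _ = deletion v Z ∆ cone v (link v Z) := by
        rw [← symmDiff_assoc, symmDiff_symmDiff_cancel_right]
    _ = Z := deletion_symmDiff_cone_link v Z

end Hypertree

section SpanningTree

lemma even_card_of_bd_eq_empty (hL : L ⊆ W.powersetCard 1) (hbd : bd L = ∅) : Even L.card := by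
  have hparity := card_bd_modEq_mul_card hL
  rw [hbd, card_empty, mul_one] at hparity
  exact Nat.even_iff.2 hparity.symm

lemma two_le_card_of_bd_eq_empty (hL : L ⊆ W.powersetCard 1) (hbd : bd L = ∅)
    (hne : L.Nonempty) : 2 ≤ W.card := by
  have hle := card_le_card hL
  rw [card_powersetCard, Nat.choose_one_right] at hle
  have hpos := hne.card_pos
  obtain ⟨r, hr⟩ := even_card_of_bd_eq_empty hL hbd
  omega

lemma exists_singleton_mem (hL : L ⊆ W.powersetCard 1) (hne : L.Nonempty) :
    ∃ w ∈ W, {w} ∈ L := by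
  obtain ⟨σ, hσ⟩ := hne
  obtain ⟨hσW, hσcard⟩ := mem_powersetCard.1 (hL hσ)
  obtain ⟨w, rfl⟩ := card_eq_one.1 hσcard
  exact ⟨w, singleton_subset_iff.1 hσW, hσ⟩

lemma link_eq_singleton_empty (hL : L ⊆ W.powersetCard 1) (hw : {w} ∈ L) : link w L = {∅} := by
  have hsub := link_subset_powersetCard (v := w) hL
  rw [powersetCard_zero] at hsub
  refine (subset_singleton_iff.1 hsub).resolve_left (ne_empty_of_mem (a := ∅) ?_)
  simpa [mem_link] using hw

lemma exists_singleton_singleton_notMem {S : Finset ℕ} {C : Finset (Finset (Finset ℕ))}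
    (hcard : C.card < S.card) : ∃ x ∈ S, {{x}} ∉ C := by
  have hinj : Function.Injective fun x : ℕ => ({{x}} : Finset (Finset ℕ)) :=
    singleton_injective.comp singleton_injective
  obtain ⟨_, hX, hXC⟩ := exists_mem_notMem_of_card_lt_card
    (hcard.trans_eq (card_image_of_injective S hinj).symm)
  obtain ⟨x, hx, rfl⟩ := mem_image.1 hX
  exact ⟨x, hx, hXC⟩

lemma exists_tree_link_eq (hL : L ⊆ W.powersetCard 1) (hwW : w ∈ W) (hw : {w} ∈ L)
    (hx : x ∈ W.erase w)
    (hG : ∃ G, IsHypertreeOn (W.erase w) 1 G ∧ bd G = deletion w L ∆ {{x}}) :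
    ∃ G, IsHypertreeOn W 1 G ∧ bd G = L ∧ link w G = {{x}} := by
  obtain ⟨G, hG, hbdG⟩ := hG
  have hxtree : IsHypertreeOn (W.erase w) 0 {{x}} := isHypertreeOn_singleton_vertex hx
  have hbdx : bd {{x}} = link w L := by
    rw [link_eq_singleton_empty hL hw, bd_singleton]
    simp
  have hwG := hG.avoids
  have hwx := hxtree.avoids
  have htree := hG.symmDiff_cone (d := 0) hwW ⟨x, hx⟩ hxtree
  exact ⟨_, htree, bd_symmDiff_cone_eq hwx hbdx hbdG, link_symmDiff_cone hwG hwx⟩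

lemma deletion_symmDiff_singleton_isCycle (hL : L ⊆ W.powersetCard 1) (hbd : bd L = ∅)
    (hw : {w} ∈ L) (hx : x ∈ W.erase w) :
    deletion w L ∆ {{x}} ⊆ (W.erase w).powersetCard 1 ∧ bd (deletion w L ∆ {{x}}) = ∅ := by
  refine ⟨symmDiff_subset (deletion_subset_powersetCard hL) (by simpa using hx), ?_⟩
  rw [bd_symmDiff, bd_deletion_eq_link hbd, link_eq_singleton_empty hL hw, bd_singleton]
  simp

lemma exists_tree_bd_eq (hL : L ⊆ W.powersetCard 1) (hbd : bd L = ∅) (hcard : L = ∅ → W.card ≤ 1) :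
    ∃ G, IsHypertreeOn W 1 G ∧ bd G = L := by
  induction W using Finset.strongInduction generalizing L with
  | H W ih =>
    rcases L.eq_empty_or_nonempty with rfl | hne
    · exact ⟨∅, isHypertreeOn_empty (hcard rfl), bd_empty⟩
    obtain ⟨w, hwW, hw⟩ := exists_singleton_mem hL hne
    have hWcard := two_le_card_of_bd_eq_empty hL hbd hne
    have hecard := card_erase_add_one hwW
    obtain ⟨x, hx, hxL⟩ : ∃ x ∈ W.erase w, deletion w L ∆ {{x}} = ∅ → (W.erase w).card ≤ 1 := by
      by_cases hsmall : (W.erase w).card ≤ 1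
      · obtain ⟨x, hx⟩ := card_pos.1 (show 0 < (W.erase w).card by omega)
        exact ⟨x, hx, fun _ => hsmall⟩
      · obtain ⟨x, hx, hxL⟩ := exists_singleton_singleton_notMem (C := {deletion w L})
          (not_le.1 hsmall)
        exact ⟨x, hx, fun h => absurd (symmDiff_eq_empty.1 h).symm (notMem_singleton.1 hxL)⟩
    obtain ⟨hsub, hcycle⟩ := deletion_symmDiff_singleton_isCycle hL hbd hw hx
    obtain ⟨G, hG, hbdG, -⟩ := exists_tree_link_eq hL hwW hw hx
      (ih _ (erase_ssubset hwW) hsub hcycle hxL)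
    exact ⟨G, hG, hbdG⟩

lemma exists_tree_bd_eq_ne (hL : L ⊆ W.powersetCard 1) (hbd : bd L = ∅) (hne : L.Nonempty)
    (hcard : 4 ≤ W.card) (H : Finset (Finset ℕ)) :
    ∃ G, IsHypertreeOn W 1 G ∧ bd G = L ∧ G ≠ H := by
  obtain ⟨w, hwW, hw⟩ := exists_singleton_mem hL hne
  have hecard := card_erase_add_one hwW
  obtain ⟨x, hx, hxC⟩ := exists_singleton_singleton_notMem (S := W.erase w)
    (C := {deletion w L, link w H}) (card_le_two.trans_lt (by omega))
  obtain ⟨hxL, hxH⟩ : {{x}} ≠ deletion w L ∧ {{x}} ≠ link w H := by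
    simpa [mem_insert, not_or] using hxC
  obtain ⟨hsub, hcycle⟩ := deletion_symmDiff_singleton_isCycle hL hbd hw hx
  obtain ⟨G, hG, hbdG, hlink⟩ := exists_tree_link_eq hL hwW hw hx <|
    exists_tree_bd_eq hsub hcycle fun h => absurd (symmDiff_eq_empty.1 h).symm hxL
  exact ⟨G, hG, hbdG, fun h => hxH (h ▸ hlink.symm)⟩

end SpanningTree

section TwoHypertree

lemma card_bd_mod_two_of_isHypertreeOn (hT : IsHypertreeOn V 2 T) (hV : V.Nonempty) :
    (bd T).card % 2 = (V.card - 1).choose 2 % 2 := by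
  have hparity := card_bd_modEq_mul_card (simplices_eq_powersetCard V 2 ▸ hT.1)
  rw [← hT.card_eq hV]
  unfold Nat.ModEq at hparity
  omega

lemma card_deletion_symmDiff_mod_two (hZ : Z ⊆ V.powersetCard 2) (hbd : bd Z = ∅) (hv : v ∈ V)
    (hV : (V.erase v).Nonempty) (hparity : Z.card % 2 = (V.card - 1).choose 2 % 2)
    (hG : IsHypertreeOn (V.erase v) 1 G) :
    (deletion v Z ∆ G).card % 2 = ((V.erase v).card - 1).choose 2 % 2 := by
  have hpos : 0 < (V.erase v).card := card_pos.2 hV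
  have hVcard : (V.erase v).card = V.card - 1 := card_erase_of_mem hv
  have hGcard : G.card = (V.erase v).card - 1 := by rw [hG.card_eq hV, Nat.choose_one_right]
  have hpascal : (V.card - 1).choose 2 =
      ((V.erase v).card - 1) + ((V.erase v).card - 1).choose 2 := by
    obtain ⟨m, hm⟩ := Nat.exists_eq_succ_of_ne_zero hpos.ne'
    rw [← hVcard, hm, Nat.choose_succ_succ', Nat.choose_one_right, Nat.succ_sub_one]
  have hlink := even_card_of_bd_eq_empty (link_subset_powersetCard (v := v) hZ)
    (bd_link_eq_empty hbd)
  have hsplit := card_deletion_add_card_link v Z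
  have hsum := card_symmDiff_add_two_mul_card_inter (deletion v Z) G
  rw [Nat.even_iff] at hlink
  omega

lemma exists_tree_bd_eq_link (hZ : Z ⊆ V.powersetCard 2) (hbd : bd Z = ∅) (hv : v ∈ V)
    (hlink : (link v Z).Nonempty) (hparity : Z.card % 2 = (V.card - 1).choose 2 % 2) :
    ∃ G, IsHypertreeOn (V.erase v) 1 G ∧ bd G = link v Z ∧
      (deletion v Z ∆ G = ∅ → (V.erase v).card ≤ 2) := by
  have hL := link_subset_powersetCard (v := v) hZ
  have hbdL := bd_link_eq_empty (v := v) hbd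
  have hcard := two_le_card_of_bd_eq_empty hL hbdL hlink
  by_cases hlarge : 4 ≤ (V.erase v).card
  · obtain ⟨G, hG, hbdG, hne⟩ := exists_tree_bd_eq_ne hL hbdL hlink hlarge (deletion v Z)
    exact ⟨G, hG, hbdG, fun h => absurd (symmDiff_eq_empty.1 h).symm hne⟩
  · obtain ⟨G, hG, hbdG⟩ := exists_tree_bd_eq hL hbdL fun h => absurd h hlink.ne_empty
    refine ⟨G, hG, hbdG, fun hempty => ?_⟩
    by_contra hthree
    have hthree : (V.erase v).card = 3 := by omega
    have hmod := card_deletion_symmDiff_mod_two hZ hbd hv (card_pos.1 (by omega)) hparity hG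
    rw [hempty, hthree] at hmod
    exact absurd hmod (by decide)

lemma exists_two_hypertree_bd_eq (hZ : Z ⊆ V.powersetCard 2) (hbd : bd Z = ∅)
    (hcard : Z = ∅ → V.card ≤ 2) (hparity : Z.card % 2 = (V.card - 1).choose 2 % 2) :
    ∃ T, IsHypertreeOn V 2 T ∧ bd T = Z := by
  induction V using Finset.strongInduction generalizing Z with
  | H V ih =>
    rcases Z.eq_empty_or_nonempty with rfl | ⟨σ, hσ⟩
    · exact ⟨∅, isHypertreeOn_empty (hcard rfl), bd_empty⟩
    obtain ⟨hσV, hσcard⟩ := mem_powersetCard.1 (hZ hσ)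
    obtain ⟨v, hvσ⟩ := card_pos.1 (hσcard ▸ two_pos)
    have hv : v ∈ V := hσV hvσ
    have hlink : (link v Z).Nonempty :=
      ⟨σ.erase v, mem_link.2 ⟨notMem_erase v σ, by rwa [insert_erase hvσ]⟩⟩
    obtain ⟨G, hG, hbdG, hsmall⟩ := exists_tree_bd_eq_link hZ hbd hv hlink hparity
    have hV : (V.erase v).Nonempty := by
      have := two_le_card_of_bd_eq_empty (link_subset_powersetCard hZ)
        (bd_link_eq_empty hbd) hlink
      exact card_pos.1 (by omega)
    have hsub : deletion v Z ∆ G ⊆ (V.erase v).powersetCard 2 :=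
      symmDiff_subset (deletion_subset_powersetCard hZ) (simplices_eq_powersetCard _ 1 ▸ hG.1)
    have hcycle : bd (deletion v Z ∆ G) = ∅ := by
      rw [bd_symmDiff, bd_deletion_eq_link hbd, hbdG, symmDiff_eq_empty]
    obtain ⟨T, hT, hbdT⟩ := ih _ (erase_ssubset hv) hsub hcycle hsmall
      (card_deletion_symmDiff_mod_two hZ hbd hv hV hparity hG)
    exact ⟨T ∆ cone v G, hT.symmDiff_cone (d := 1) hv hV hG,
      bd_symmDiff_cone_eq hG.avoids hbdG hbdT⟩

end TwoHypertree

theorem boundary_of_two_hypertree_iff_general (hZ : Z ⊆ simplices V 1) (hZcyc : bd Z = ∅)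
    (hZne : Z ≠ ∅) :
    (∃ T, IsHypertreeOn V 2 T ∧ bd T = Z) ↔ Z.card % 2 = (V.card - 1).choose 2 % 2 := by
  rw [simplices_eq_powersetCard] at hZ
  have hV : V.Nonempty := by
    obtain ⟨σ, hσ⟩ := nonempty_iff_ne_empty.2 hZne
    obtain ⟨hσV, hσcard⟩ := mem_powersetCard.1 (hZ hσ)
    exact (card_pos.1 (hσcard ▸ two_pos)).mono hσV
  constructor
  · rintro ⟨T, hT, rfl⟩
    exact card_bd_mod_two_of_isHypertreeOn hT hV
  · exact exists_two_hypertree_bd_eq hZ hZcyc fun h => absurd h hZne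

/-- A nontrivial 1-cycle `Z` on `[n]` (`n ≥ 3`) over `F_2` is the boundary of a
2-hypertree on `[n]` iff `|Z| ≡ C(n-1,2) (mod 2)`. -/
theorem boundary_of_two_hypertree_iff (n : ℕ) (hn : 3 ≤ n) (Z : Finset (Finset ℕ))
    (hZ : Z ⊆ simplices (rng n) 1) (hZcyc : bd Z = ∅) (hZne : Z ≠ ∅) :
    (∃ T, IsHypertreeOn (rng n) 2 T ∧ bd T = Z) ↔
      Z.card % 2 = (n - 1).choose 2 % 2 := by
  simpa [rng] using boundary_of_two_hypertree_iff_general hZ hZcyc hZne
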